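/- Let n > 1 be an integer and let p be an odd prime with p > rad(n). Then for each positive integer k, (1, n^{p·ord_p(n)·k} - 1, n^{p·ord_p(n)·k}) is an abc triple. In particular, if n ≡ 1 (mod p) and p > rad(n), then (1, n^{pk} - 1, n^{pk}) is an abc triple for each positive integer k. -/

import Mathlib

open scoped Classical

/-- The radical of a natural number: the product of its distinct prime factors. -/
def rad (n : ℕ) : ℕ := ∏ p ∈ n.primeFactors, p

/-- The cosocle of a natural number: `n / rad n`. -/
def cosocle (n : ℕ) : ℕ := n / rad n

/-- `(a, b, c)` is an abc triple: `a, b, c` are relatively prime positive integers with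
`a + b = c` and `rad (a*b*c) < c`. -/
def IsABCTriple (a b c : ℕ) : Prop :=
  0 < a ∧ 0 < b ∧ 0 < c ∧ a + b = c ∧
    Nat.Coprime a b ∧ Nat.Coprime a c ∧ Nat.Coprime b c ∧ rad (a * b * c) < c

/-! If `n ^ j ≡ 1 [MOD m]`, then raising to the `m`-th power gains a factor of `m`: writing
`c = n ^ (m * j)`, we get `m ^ 2 ∣ c - 1`. The square costs `c - 1` a factor of `m` in its radical,
so `rad (c - 1) ≤ (c - 1) / m`, while `rad c = rad n ≤ m`; hence `rad ((c - 1) * c) ≤ c - 1`.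
Such a `j > 0` exists as soon as `n` is coprime to `m`: any multiple of the order of `n`
modulo `m`. -/

open UniqueFactorizationMonoid

theorem radical_mul_dvd_of_sq_dvd {M : Type*} [CommMonoidWithZero M] [NormalizationMonoid M]
    [UniqueFactorizationMonoid M] {a b : M} (ha : a ≠ 0) (h : b ^ 2 ∣ a) : radical a * b ∣ a := by
  obtain ⟨t, rfl⟩ := h
  have hdvd : radical (b ^ 2 * t) ∣ b * t :=
    (exists_dvd_pow_iff_radical_dvd ha).mp ⟨2, t, by simp only [sq]; ac_rfl⟩
  calc radical (b ^ 2 * t) * b ∣ b * t * b := mul_dvd_mul_right hdvd b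
    _ = b ^ 2 * t := by rw [sq, mul_right_comm]

theorem modEq_pow_pow_of_modEq {m a b : ℕ} (h : a ≡ b [MOD m]) (k : ℕ) :
    a ^ m ^ k ≡ b ^ m ^ k [MOD m ^ (k + 1)] := by
  rw [Nat.modEq_iff_dvd] at h ⊢
  exact_mod_cast dvd_sub_pow_of_dvd_sub h k

theorem rad_eq_radical (n : ℕ) : rad n = radical n :=
  Nat.radical_eq_prod_primeFactors.symm

theorem coprime_of_rad_lt_prime {n p : ℕ} (hn : n ≠ 0) (hp : p.Prime) (h : rad n < p) :
    n.Coprime p := by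
  refine (hp.coprime_iff_not_dvd.mpr fun hdvd ↦ h.not_ge ?_).symm
  rw [rad_eq_radical]
  exact Nat.le_of_dvd (Nat.radical_pos n) ((dvd_radical_iff_of_irreducible hp hn).mpr hdvd)

theorem isABCTriple_one_of_sq_dvd {m c : ℕ} (hc : 1 < c) (hdvd : m ^ 2 ∣ c - 1)
    (hrad : rad c ≤ m) : IsABCTriple 1 (c - 1) c := by
  have hcop : (c - 1).Coprime c :=
    (Nat.coprime_self_sub_left hc.le).mpr (Nat.coprime_one_left c)
  refine ⟨one_pos, by lia, by lia, by lia, Nat.coprime_one_left _, Nat.coprime_one_left _,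
    hcop, ?_⟩
  calc rad (1 * (c - 1) * c) = radical (c - 1) * rad c := by
        rw [one_mul, rad_eq_radical, rad_eq_radical,
          radical_mul (Nat.coprime_iff_isRelPrime.mp hcop)]
    _ ≤ radical (c - 1) * m := by gcongr
    _ ≤ c - 1 := Nat.le_of_dvd (by lia) (radical_mul_dvd_of_sq_dvd (by lia) hdvd)
    _ < c := by lia

theorem isABCTriple_one_pow_of_modEq {n m j : ℕ} (hn : 1 < n) (hrad : rad n ≤ m) (hj : j ≠ 0)
    (h : n ^ j ≡ 1 [MOD m]) : IsABCTriple 1 (n ^ (m * j) - 1) (n ^ (m * j)) := by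
  have hm : 0 < m := by
    rw [rad_eq_radical] at hrad
    exact (Nat.radical_pos n).trans_le hrad
  have hmj : m * j ≠ 0 := mul_ne_zero hm.ne' hj
  have hc : 1 < n ^ (m * j) := Nat.one_lt_pow hmj hn
  have hmod : 1 ≡ n ^ (m * j) [MOD m ^ 2] := by
    simpa only [pow_one, one_pow, ← pow_mul, mul_comm j] using (modEq_pow_pow_of_modEq h 1).symm
  refine isABCTriple_one_of_sq_dvd hc ((Nat.modEq_iff_dvd' hc.le).mp hmod) ?_
  rwa [rad_eq_radical, radical_pow n hmj, ← rad_eq_radical]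

theorem orderOf_natCast_zmod_pos {n m : ℕ} [NeZero m] (h : n.Coprime m) :
    0 < orderOf (n : ZMod m) :=
  (isOfFinOrder_iff_isUnit.mpr ((ZMod.isUnit_iff_coprime n m).mpr h)).orderOf_pos

theorem pow_orderOf_zmod_mul_modEq_one (n m k : ℕ) :
    n ^ (orderOf (n : ZMod m) * k) ≡ 1 [MOD m] := by
  rw [← ZMod.natCast_eq_natCast_iff]
  push_cast
  rw [pow_mul, pow_orderOf_eq_one, one_pow]

theorem stmt_15_general (n m : ℕ) (hn : 1 < n) (hrad : rad n ≤ m) :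
    (n.Coprime m → ∀ k : ℕ, 0 < k →
      IsABCTriple 1 (n ^ (m * orderOf (n : ZMod m) * k) - 1)
        (n ^ (m * orderOf (n : ZMod m) * k))) ∧
    (n ≡ 1 [MOD m] → ∀ k : ℕ, 0 < k →
      IsABCTriple 1 (n ^ (m * k) - 1) (n ^ (m * k))) := by
  refine ⟨fun hcop k hk ↦ ?_, fun hmod k hk ↦ ?_⟩
  · have : NeZero m := ⟨by rintro rfl; exact hn.ne' ((Nat.coprime_zero_right n).mp hcop)⟩
    rw [mul_assoc]
    exact isABCTriple_one_pow_of_modEq hn hrad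
      (mul_ne_zero (orderOf_natCast_zmod_pos hcop).ne' hk.ne')
      (pow_orderOf_zmod_mul_modEq_one n m k)
  · exact isABCTriple_one_pow_of_modEq hn hrad hk.ne' (by simpa only [one_pow] using hmod.pow k)

theorem stmt_15 (n p : ℕ) (hn : 1 < n) (hp : p.Prime) (hodd : Odd p) (hrad : rad n < p) :
    (∀ k : ℕ, 0 < k →
      IsABCTriple 1 (n ^ (p * orderOf (n : ZMod p) * k) - 1)
        (n ^ (p * orderOf (n : ZMod p) * k))) ∧
    (n ≡ 1 [MOD p] → ∀ k : ℕ, 0 < k →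
      IsABCTriple 1 (n ^ (p * k) - 1) (n ^ (p * k))) :=
  (stmt_15_general n p hn hrad.le).imp_left fun h ↦
    h (coprime_of_rad_lt_prime (Nat.ne_zero_of_lt hn) hp hrad)
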